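/- Let Ω ⊆ ℂ be open, let γ : ℂ → ℝ be continuously differentiable on Ω with γ(z) > 0 for all z ∈ Ω, and set q = −γ^{−1/2}·∂(γ^{1/2}) on Ω. Suppose v, w : ℂ → ℂ are continuously differentiable on Ω and satisfy ∂̄v = q·w and ∂w = conj(q)·v on Ω. Then the compatibility relation ∂̄(γ^{−1/2}·v) = ∂(γ^{−1/2}·w) holds on Ω. -/

import Mathlib

open MeasureTheory Complex

/-- Wirtinger derivative `∂f = (∂ₓf − i∂_yf)/2` of `f : ℂ → ℂ`. -/
noncomputable def wD (f : ℂ → ℂ) (z : ℂ) : ℂ :=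
  (fderiv ℝ f z 1 - Complex.I * fderiv ℝ f z Complex.I) / 2

/-- Wirtinger derivative `∂̄f = (∂ₓf + i∂_yf)/2` of `f : ℂ → ℂ`. -/
noncomputable def wDbar (f : ℂ → ℂ) (z : ℂ) : ℂ :=
  (fderiv ℝ f z 1 + Complex.I * fderiv ℝ f z Complex.I) / 2

/-!
Write `σ = γ^{1/2}`, so `q = -σ⁻¹ ∂σ`; as `σ` is real, `conj q = -σ⁻¹ ∂̄σ`. By the Leibniz and
quotient rules, each of `∂̄(σ⁻¹ v)` and `∂(σ⁻¹ w)` consists of one term where the derivative falls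
on `σ⁻¹` and one where it falls on `v` or `w`. The system turns the latter into the former term of
the other expression, so both are equal to `-σ⁻² (∂̄σ · v + ∂σ · w)`.
-/

theorem fderiv_fun_inv_of_ne_zero {𝕜 E R : Type*} [NontriviallyNormedField 𝕜]
    [NormedAddCommGroup E] [NormedSpace 𝕜 E] [NormedField R] [NormedAlgebra 𝕜 R]
    {f : E → R} {x : E} (hf : DifferentiableAt 𝕜 f x) (hx : f x ≠ 0) :
    fderiv 𝕜 (fun y => (f y)⁻¹) x = -(f x ^ 2)⁻¹ • fderiv 𝕜 f x := by
  have chain_rule := ((hasFDerivAt_inv' (𝕜 := 𝕜) hx).comp x hf.hasFDerivAt).fderiv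
  refine chain_rule.trans ?_
  ext u
  simp only [ContinuousLinearMap.neg_comp, neg_apply, ContinuousLinearMap.comp_apply,
    ContinuousLinearMap.mulLeftRight_apply, smul_apply, smul_eq_mul]
  ring

section Wirtinger

variable {f g σ v w : ℂ → ℂ} {z : ℂ}

theorem wD_mul (hf : DifferentiableAt ℝ f z) (hg : DifferentiableAt ℝ g z) :
    wD (fun ζ => f ζ * g ζ) z = f z * wD g z + g z * wD f z := by
  simp only [wD, fderiv_fun_mul hf hg, add_apply, smul_apply, smul_eq_mul]
  ring

theorem wDbar_mul (hf : DifferentiableAt ℝ f z) (hg : DifferentiableAt ℝ g z) :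
    wDbar (fun ζ => f ζ * g ζ) z = f z * wDbar g z + g z * wDbar f z := by
  simp only [wDbar, fderiv_fun_mul hf hg, add_apply, smul_apply, smul_eq_mul]
  ring

theorem wD_inv (hf : DifferentiableAt ℝ f z) (hz : f z ≠ 0) :
    wD (fun ζ => (f ζ)⁻¹) z = -(f z ^ 2)⁻¹ * wD f z := by
  simp only [wD, fderiv_fun_inv_of_ne_zero hf hz, smul_apply, smul_eq_mul]
  ring

theorem wDbar_inv (hf : DifferentiableAt ℝ f z) (hz : f z ≠ 0) :
    wDbar (fun ζ => (f ζ)⁻¹) z = -(f z ^ 2)⁻¹ * wDbar f z := by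
  simp only [wDbar, fderiv_fun_inv_of_ne_zero hf hz, smul_apply, smul_eq_mul]
  ring

theorem wDbar_conj (f : ℂ → ℂ) (z : ℂ) :
    wDbar (fun ζ => starRingEnd ℂ (f ζ)) z = starRingEnd ℂ (wD f z) := by
  have fderiv_conj : fderiv ℝ (fun ζ => starRingEnd ℂ (f ζ)) z =
      (conjCLE : ℂ →L[ℝ] ℂ).comp (fderiv ℝ f z) := conjCLE.comp_fderiv
  simp [wD, wDbar, fderiv_conj, map_ofNat]

theorem conj_wD_ofReal (ρ : ℂ → ℝ) (z : ℂ) :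
    starRingEnd ℂ (wD (fun ζ => (ρ ζ : ℂ)) z) = wDbar (fun ζ => (ρ ζ : ℂ)) z := by
  simp only [← wDbar_conj, conj_ofReal]

theorem wDbar_inv_mul_eq_wD_inv_mul (hσ : DifferentiableAt ℝ σ z) (hσz : σ z ≠ 0)
    (hv : DifferentiableAt ℝ v z) (hw : DifferentiableAt ℝ w z)
    (hv_eq : wDbar v z = -(σ z)⁻¹ * wD σ z * w z)
    (hw_eq : wD w z = -(σ z)⁻¹ * wDbar σ z * v z) :
    wDbar (fun ζ => (σ ζ)⁻¹ * v ζ) z = wD (fun ζ => (σ ζ)⁻¹ * w ζ) z := by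
  have hσinv : DifferentiableAt ℝ (fun ζ => (σ ζ)⁻¹) z := hσ.fun_inv hσz
  calc
    wDbar (fun ζ => (σ ζ)⁻¹ * v ζ) z
      = (σ z)⁻¹ * wDbar v z + v z * (-(σ z ^ 2)⁻¹ * wDbar σ z) := by
        rw [wDbar_mul hσinv hv, wDbar_inv hσ hσz]
    _ = -(σ z ^ 2)⁻¹ * (wDbar σ z * v z + wD σ z * w z) := by rw [hv_eq]; ring
    _ = (σ z)⁻¹ * wD w z + w z * (-(σ z ^ 2)⁻¹ * wD σ z) := by rw [hw_eq]; ring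
    _ = wD (fun ζ => (σ ζ)⁻¹ * w ζ) z := by rw [wD_mul hσinv hw, wD_inv hσ hσz]

end Wirtinger

theorem compatibility_relation_general {ρ : ℂ → ℝ} {q : ℂ} {v w : ℂ → ℂ} {z : ℂ}
    (hρ : DifferentiableAt ℝ ρ z) (hρz : ρ z ≠ 0)
    (hq : q = -(ρ z : ℂ)⁻¹ * wD (fun ζ => (ρ ζ : ℂ)) z)
    (hv : DifferentiableAt ℝ v z) (hw : DifferentiableAt ℝ w z)
    (hv_eq : wDbar v z = q * w z) (hw_eq : wD w z = starRingEnd ℂ q * v z) :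
    wDbar (fun ζ => (ρ ζ : ℂ)⁻¹ * v ζ) z = wD (fun ζ => (ρ ζ : ℂ)⁻¹ * w ζ) z := by
  have hρ_complex : DifferentiableAt ℝ (fun ζ => (ρ ζ : ℂ)) z :=
    ofRealCLM.differentiableAt.comp z hρ
  have conj_q : starRingEnd ℂ q = -(ρ z : ℂ)⁻¹ * wDbar (fun ζ => (ρ ζ : ℂ)) z := by
    rw [hq, map_mul, conj_wD_ofReal, map_neg, map_inv₀, conj_ofReal]
  rw [hq] at hv_eq
  rw [conj_q] at hw_eq
  exact wDbar_inv_mul_eq_wD_inv_mul hρ_complex (ofReal_ne_zero.2 hρz) hv hw hv_eq hw_eq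

/-- If `(v,w)` solves the first order system `∂̄v = q·w`, `∂w = conj(q)·v` with
`q = −γ^{−1/2}∂(γ^{1/2})`, then the compatibility relation
`∂̄(γ^{−1/2}v) = ∂(γ^{−1/2}w)` holds. -/
theorem compatibility_relation
    (Ω : Set ℂ) (hΩ : IsOpen Ω) (γ : ℂ → ℝ)
    (hγ : ContDiffOn ℝ 1 γ Ω) (hγpos : ∀ z ∈ Ω, 0 < γ z)
    (q : ℂ → ℂ)
    (hq : ∀ z ∈ Ω, q z
      = -((Real.sqrt (γ z) : ℂ))⁻¹ * wD (fun ζ => (Real.sqrt (γ ζ) : ℂ)) z)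
    (v w : ℂ → ℂ) (hv : ContDiffOn ℝ 1 v Ω) (hw : ContDiffOn ℝ 1 w Ω)
    (h1 : ∀ z ∈ Ω, wDbar v z = q z * w z)
    (h2 : ∀ z ∈ Ω, wD w z = (starRingEnd ℂ) (q z) * v z) :
    ∀ z ∈ Ω,
      wDbar (fun ζ => ((Real.sqrt (γ ζ) : ℂ))⁻¹ * v ζ) z
        = wD (fun ζ => ((Real.sqrt (γ ζ) : ℂ))⁻¹ * w ζ) z := by
  intro z hz
  have hΩz : Ω ∈ nhds z := hΩ.mem_nhds hz
  have hγ_diff : DifferentiableAt ℝ γ z := (hγ.contDiffAt hΩz).differentiableAt one_ne_zero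
  exact compatibility_relation_general (hγ_diff.sqrt (hγpos z hz).ne')
    (Real.sqrt_pos.2 (hγpos z hz)).ne' (hq z hz)
    ((hv.contDiffAt hΩz).differentiableAt one_ne_zero)
    ((hw.contDiffAt hΩz).differentiableAt one_ne_zero) (h1 z hz) (h2 z hz)
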